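/- arXiv:2507.16520 — 7 statements merged into one kernel-verified Lean document; each statement's English description precedes it below -/
import Mathlib

section
/- For all real numbers x and y, -x^3*(x+y) ≤ (-(1/2)*|x|^(4/3) + |y|^(4/3))^3. -/
/-!
Put `a = |x|^(1/3)` and `b = |y|^(1/3)`. Since `-x³y ≤ |x|³|y|`, it suffices to show
`-a¹² + a⁹b³ ≤ U³` where `U = b⁴ - a⁴/2`. The tangent line to the cube at `a⁴/2`
(where `U` sits when `a = b`) gives `U³ ≥ (3/4) a⁸ U - a¹²/4`, valid because `U ≥ -a⁴`. What remains
is `a⁸` times the quartic inequality `4ab³ ≤ 3b⁴ + a⁴`, with slack `a¹²/8`.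
-/

/-- The inequality after substituting cube roots. -/
lemma cube_root_form (a b : ℝ) :
    -a ^ 12 + a ^ 9 * b ^ 3 ≤ (-(1 / 2) * a ^ 4 + b ^ 4) ^ 3 := by
  -- This is `(U - a⁴/2)² (U + a⁴) ≥ 0`, the gap between the cube and its tangent.
  have tangent : 0 ≤ (b ^ 4 - a ^ 4) ^ 2 * (b ^ 4 + a ^ 4 / 2) := by positivity
  have quartic : 0 ≤ a ^ 8 * ((a - b) ^ 2 * (2 * b ^ 2 + (a + b) ^ 2)) := by positivity
  have slack : 0 ≤ a ^ 12 := by positivity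
  linarith

/-- Key intermediate inequality of Appendix A:
`-x^3 (x+y) ≤ (-(1/2) |x|^(4/3) + |y|^(4/3))^3`. -/
theorem neg_cube_mul_add_le_cube (x y : ℝ) :
    -(x ^ 3 * (x + y)) ≤ (-(1 / 2) * |x| ^ ((4 : ℝ) / 3) + |y| ^ ((4 : ℝ) / 3)) ^ 3 := by
  have root (t : ℝ) : (|t| ^ ((1 : ℝ) / 3)) ^ 3 = |t| := by
    rw [← Real.rpow_mul_natCast (abs_nonneg t)]; norm_num
  have root_four (t : ℝ) : |t| ^ ((4 : ℝ) / 3) = (|t| ^ ((1 : ℝ) / 3)) ^ 4 := by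
    rw [← Real.rpow_mul_natCast (abs_nonneg t)]; norm_num
  have key := cube_root_form (|x| ^ ((1 : ℝ) / 3)) (|y| ^ ((1 : ℝ) / 3))
  rw [← root_four, ← root_four, root y, pow_mul _ 3 4, pow_mul _ 3 3, root x] at key
  have hx : |x| ^ 4 = x ^ 4 := Even.pow_abs (by decide) x
  have hxy : -(x ^ 3 * y) ≤ |x| ^ 3 * |y| := by
    rw [← abs_pow, ← abs_mul]; exact neg_le_abs _
  linarith
end

section
/- For all real numbers x and y, -x * cbrt(x+y) ≤ -(1/2)*|x|^(4/3) + |y|^(4/3), where cbrt(t) := sign(t)*|t|^(1/3) is the real (odd) cube root of t. -/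
/-!
Writing `x = a³`, `y = b³`, `x + y = t³`, the claim becomes the polynomial inequality
`a⁴ / 2 ≤ a³ t + b⁴` under the constraint `t³ = a³ + b³`. By the symmetry
`(a, b, t) ↦ (-a, -b, -t)` one may take `a ≥ 0`, and the cases are then as follows.
* `t ≥ a / 2`: the term `a³ t` suffices.
* `0 ≤ t < a / 2`: then `-b³ = a³ - t³ ≥ (7/8) a³`, so `-b ≥ (7/8) a` and `b⁴` suffices.
* `t < 0`: with `s = -t`, `-b³ = a³ + s³`, so `-b ≥ a` and `b⁴ ≥ a (a³ + s³) ≥ a⁴ / 2 + a³ s`.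
-/

/-- The real (odd) cube root of `t`. -/
noncomputable def cbrt (t : ℝ) : ℝ := Real.sign t * |t| ^ ((1 : ℝ) / 3)

lemma cbrt_pow_three (t : ℝ) : cbrt t ^ 3 = t := by
  have h : (|t| ^ ((1 : ℝ) / 3)) ^ 3 = |t| := by
    rw [← Real.rpow_natCast, ← Real.rpow_mul (abs_nonneg t)]
    norm_num
  rw [cbrt, mul_pow, h]
  rcases lt_trichotomy t 0 with ht | rfl | ht
  · rw [Real.sign_of_neg ht, abs_of_neg ht]; ring
  · simp
  · rw [Real.sign_of_pos ht, abs_of_pos ht]; ring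

lemma abs_rpow_four_thirds (t : ℝ) : |t| ^ ((4 : ℝ) / 3) = cbrt t ^ 4 := by
  have h : (|t| ^ ((1 : ℝ) / 3)) ^ 4 = |t| ^ ((4 : ℝ) / 3) := by
    rw [← Real.rpow_natCast, ← Real.rpow_mul (abs_nonneg t)]
    norm_num
  rw [cbrt, mul_pow, h]
  rcases lt_trichotomy t 0 with ht | rfl | ht
  · rw [Real.sign_of_neg ht]; ring
  · simp
  · rw [Real.sign_of_pos ht]; ring

lemma half_pow_four_le_of_nonneg {a b t : ℝ} (ha : 0 ≤ a) (h : t ^ 3 = a ^ 3 + b ^ 3) :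
    a ^ 4 / 2 ≤ a ^ 3 * t + b ^ 4 := by
  have ha3 : 0 ≤ a ^ 3 := pow_nonneg ha 3
  have hb4 : 0 ≤ b ^ 4 := by positivity
  rcases le_or_gt (a / 2) t with h1 | h1
  · nlinarith [mul_le_mul_of_nonneg_left h1 ha3]
  have hodd : Odd 3 := by decide
  rcases le_or_gt 0 t with h2 | h2
  · have ht3 : t ^ 3 ≤ (a / 2) ^ 3 := pow_le_pow_left₀ h2 h1.le 3
    have hc : 7 / 8 * a ≤ -b := by
      refine hodd.pow_le_pow.mp ?_
      nlinarith
    have hc4 : (7 / 8 * a) ^ 4 ≤ (-b) ^ 4 := pow_le_pow_left₀ (by positivity) hc 4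
    nlinarith [mul_nonneg ha3 h2, mul_nonneg ha3 ha]
  · have ht3 : t ^ 3 ≤ 0 := hodd.pow_nonpos h2.le
    have hc : a ≤ -b := by
      refine hodd.pow_le_pow.mp ?_
      nlinarith
    have hc4 : a * (-b) ^ 3 ≤ (-b) * (-b) ^ 3 :=
      mul_le_mul_of_nonneg_right hc (pow_nonneg (ha.trans hc) 3)
    -- The one-variable inequality `s ≤ s³ + 1 / 2` for `s ≥ 0`, homogenised with `s = -t`.
    have hcub : a ^ 2 * (-t) ≤ (-t) ^ 3 + a ^ 3 / 2 := by
      have hs : 0 ≤ -t := by linarith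
      nlinarith [mul_nonneg hs (sq_nonneg (-t - a / 2)), mul_nonneg ha (sq_nonneg (-t - a / 2)),
        mul_nonneg hs (sq_nonneg (-t - 3 / 5 * a)), mul_nonneg ha (sq_nonneg (-t - 3 / 5 * a)),
        mul_nonneg (sq_nonneg a) hs]
    have hb3 : (-b) ^ 3 = a ^ 3 + (-t) ^ 3 := by linear_combination h
    rw [hb3] at hc4
    have hb : b ^ 4 = (-b) * (a ^ 3 + (-t) ^ 3) := by rw [← hb3]; ring
    nlinarith [mul_le_mul_of_nonneg_left hcub ha]

lemma half_pow_four_le {a b t : ℝ} (h : t ^ 3 = a ^ 3 + b ^ 3) :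
    a ^ 4 / 2 ≤ a ^ 3 * t + b ^ 4 := by
  rcases le_total 0 a with ha | ha
  · exact half_pow_four_le_of_nonneg ha h
  · have := half_pow_four_le_of_nonneg (a := -a) (b := -b) (t := -t) (by linarith)
      (by linear_combination -h)
    linarith [show (-a) ^ 4 / 2 = a ^ 4 / 2 by ring,
      show (-a) ^ 3 * -t + (-b) ^ 4 = a ^ 3 * t + b ^ 4 by ring]

/-- Scalar (componentwise) form of Lemma 4:
`-x * cbrt (x + y) ≤ -(1/2) |x|^(4/3) + |y|^(4/3)`. -/
theorem neg_mul_cbrt_le (x y : ℝ) :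
    -(x * cbrt (x + y)) ≤ -(1 / 2) * |x| ^ ((4 : ℝ) / 3) + |y| ^ ((4 : ℝ) / 3) := by
  have h := half_pow_four_le (a := cbrt x) (b := cbrt y) (t := cbrt (x + y))
    (by simp only [cbrt_pow_three])
  rw [cbrt_pow_three] at h
  rw [abs_rpow_four_thirds, abs_rpow_four_thirds]
  linarith
end

section
/- Let n be a positive integer and let a, b ∈ ℝ^n with components a_i, b_i. Then -∑_{i=1}^n a_i * cbrt(a_i + b_i) ≤ -(1/2)*∑_{i=1}^n |a_i|^(4/3) + ∑_{i=1}^n |b_i|^(4/3), where cbrt(t) := sign(t)*|t|^(1/3) is the real (odd) cube root of t. -/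
lemma quartic_le_of_nonneg {u v w : ℝ} (hu : 0 ≤ u) (h : w ^ 3 = u ^ 3 + v ^ 3) :
    u ^ 4 / 2 ≤ u ^ 3 * w + v ^ 4 := by
  have hu3 : 0 ≤ u ^ 3 := by positivity
  rcases le_total (u / 2) w with hw | hw
  · have := mul_le_mul_of_nonneg_left hw hu3
    have : 0 ≤ v ^ 4 := by positivity
    linarith
  obtain ⟨t, rfl⟩ : ∃ t, v = -t := ⟨-v, by ring⟩
  have ht : t ^ 3 = u ^ 3 - w ^ 3 := by linarith [show (-t) ^ 3 = -t ^ 3 by ring]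
  rcases le_total 0 w with hw0 | hw0
  · -- Here `t ^ 3 ≥ (7 / 8) * u ^ 3`, so `t ≥ (7 / 8) * u` and `t ^ 4 ≥ (49 / 64) * u ^ 4`.
    have h1 : w ^ 3 ≤ (u / 2) ^ 3 := pow_le_pow_left₀ hw0 hw 3
    have h2 : 7 / 8 * u ≤ t := (Odd.strictMono_pow (R := ℝ) (n := 3) (by decide)).le_iff_le.mp
      (show (7 / 8 * u) ^ 3 ≤ t ^ 3 by
        linarith [show (7 / 8 * u) ^ 3 = 343 / 512 * u ^ 3 by ring,
          show (u / 2) ^ 3 = u ^ 3 / 8 by ring])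
    have h3 := mul_le_mul h2 (show 7 / 8 * u ^ 3 ≤ t ^ 3 by linarith) (by positivity)
      (by linarith)
    have h4 : 0 ≤ u ^ 3 * w := by positivity
    have h5 : 0 ≤ u ^ 4 := by positivity
    linarith [show (-t) ^ 4 = t * t ^ 3 by ring,
      show 7 / 8 * u * (7 / 8 * u ^ 3) = 49 / 64 * u ^ 4 by ring]
  · -- With `s = -w ≥ 0`, `t ≥ u` gives `t ^ 4 ≥ u * (u ^ 3 + s ^ 3)`, and
    -- `s ^ 3 - u ^ 2 * s + u ^ 3 / 2` is nonnegative for `s, u ≥ 0`.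
    obtain ⟨s, rfl⟩ : ∃ s, w = -s := ⟨-w, by ring⟩
    have hs : 0 ≤ s := by linarith
    have hs3 : 0 ≤ s ^ 3 := by positivity
    have ht' : t ^ 3 = u ^ 3 + s ^ 3 := by rw [ht]; ring
    have h2 : u ≤ t := (Odd.strictMono_pow (R := ℝ) (n := 3) (by decide)).le_iff_le.mp
      (show u ^ 3 ≤ t ^ 3 by linarith)
    have h3 : u * (u ^ 3 + s ^ 3) ≤ t * t ^ 3 := by
      rw [ht']; exact mul_le_mul_of_nonneg_right h2 (by positivity)
    have h4 : 0 ≤ s ^ 3 - u ^ 2 * s + u ^ 3 / 2 := by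
      nlinarith [mul_nonneg hs (sq_nonneg (s - 3 / 5 * u)),
        mul_nonneg hu (sq_nonneg (s - 3 / 5 * u)), pow_nonneg hu 3]
    have h5 := mul_nonneg hu h4
    linarith [show (-t) ^ 4 = t * t ^ 3 by ring,
      show u * (s ^ 3 - u ^ 2 * s + u ^ 3 / 2) =
        u * (u ^ 3 + s ^ 3) + u ^ 3 * -s - u ^ 4 / 2 by ring]

lemma quartic_le {u v w : ℝ} (h : w ^ 3 = u ^ 3 + v ^ 3) :
    u ^ 4 / 2 ≤ u ^ 3 * w + v ^ 4 := by
  rcases le_total 0 u with hu | hu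
  · exact quartic_le_of_nonneg hu h
  · have := quartic_le_of_nonneg (u := -u) (v := -v) (w := -w) (by linarith)
      (by linear_combination -h)
    linarith [show (-u) ^ 4 = u ^ 4 by ring, show (-v) ^ 4 = v ^ 4 by ring,
      show (-u) ^ 3 * -w = u ^ 3 * w by ring]

/-- Lemma 4: `-aᵀ(a+b)^(1/3) ≤ -(1/2) ∑ |a_i|^(4/3) + ∑ |b_i|^(4/3)`,
with the cube root applied componentwise. -/
theorem neg_inner_cbrt_le (n : ℕ) (hn : 0 < n) (a b : Fin n → ℝ) :
    -(∑ i, a i * cbrt (a i + b i)) ≤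
      -(1 / 2) * ∑ i, |a i| ^ ((4 : ℝ) / 3) + ∑ i, |b i| ^ ((4 : ℝ) / 3) := by
  rw [← Finset.sum_neg_distrib, Finset.mul_sum, ← Finset.sum_add_distrib]
  refine Finset.sum_le_sum fun i _ => ?_
  have h := quartic_le (u := cbrt (a i)) (v := cbrt (b i)) (w := cbrt (a i + b i))
    (by simp only [cbrt_pow_three])
  rw [cbrt_pow_three] at h
  rw [abs_rpow_four_thirds, abs_rpow_four_thirds]
  linarith
end

section
/- For all real numbers x and y, -x*(x+y)^3 ≤ -(1/8)*x^4 + 172*y^4. -/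
/-- Scalar (componentwise) form of Lemma 5. -/
theorem neg_mul_add_cube_le (x y : ℝ) :
    -(x * (x + y) ^ 3) ≤ -(1 / 8) * x ^ 4 + 172 * y ^ 4 := by
  -- Completing squares twice: the right side minus the left side is
  -- `7/8 (x² + 12/7 xy)² + 3/7 (xy + 7/6 y²)² + (172 - 7/12) y⁴`.
  linarith [sq_nonneg (x ^ 2 + 12 / 7 * (x * y)), sq_nonneg (x * y + 7 / 6 * y ^ 2),
    sq_nonneg (y ^ 2)]
end

section
/- Let k_p, k_q > 0 and let p, q be real numbers with 0 < p < 1 < q. Let V : ℝ → ℝ be a differentiable function with V(t) ≥ 0 for all t ≥ 0, and suppose that for all t ≥ 0 the derivative satisfies V'(t) ≤ -k_p*V(t)^p - k_q*V(t)^q. Then V(t) = 0 for every t ≥ T_max, where T_max = 1/(k_p*(1-p)) + 1/(k_q*(q-1)). -/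
/-!
`V` is nonincreasing, so if `V t > 0` at some `t ≥ T_max`, then `V > 0` on all of `[0, t]` and
real powers of `V` are differentiable there. Keeping only the `q`-term of the inequality,
`V ^ (1 - q)` grows at rate at least `k_q * (q - 1)`; since it starts positive, it exceeds `1`
at time `T₁ = 1 / (k_q * (q - 1))`, i.e. `V T₁ < 1`, whatever `V 0` is. Keeping only the
`p`-term, `V ^ (1 - p)` decreases at rate at least `k_p * (1 - p)`; being less than `1` at `T₁`,
it is negative at time `T₁ + 1 / (k_p * (1 - p))`, which is absurd.
-/

/-- Both separated differential inequalities at once: with `r < 1` the power `V ^ (1 - r)`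
decreases at rate at least `k * (1 - r)`, with `r > 1` it increases at rate at least
`k * (r - 1)`. Dividing by `1 - r` puts both cases into the same form. -/
lemma rpow_div_add_le {V : ℝ → ℝ} {k r T : ℝ} (hr : r ≠ 1) (hdiff : Differentiable ℝ V)
    (hpos : ∀ s ∈ Set.Icc 0 T, 0 < V s)
    (hineq : ∀ s ∈ Set.Icc 0 T, deriv V s ≤ -k * V s ^ r)
    {a b : ℝ} (ha : 0 ≤ a) (hab : a ≤ b) (hb : b ≤ T) :
    V b ^ (1 - r) / (1 - r) + k * b ≤ V a ^ (1 - r) / (1 - r) + k * a := by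
  have hr' : 1 - r ≠ 0 := sub_ne_zero.mpr hr.symm
  have hd : ∀ s ∈ Set.Icc 0 T, HasDerivAt (fun s => V s ^ (1 - r) / (1 - r) + k * s)
      (deriv V s * (1 - r) * V s ^ (1 - r - 1) / (1 - r) + k * 1) s := fun s hs =>
    (((hdiff s).hasDerivAt.rpow_const (Or.inl (hpos s hs).ne')).div_const _).add
      ((hasDerivAt_id s).const_mul k)
  have hanti : AntitoneOn (fun s => V s ^ (1 - r) / (1 - r) + k * s) (Set.Icc 0 T) := by
    refine antitoneOn_of_deriv_nonpos (convex_Icc 0 T)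
      (fun s hs => (hd s hs).continuousAt.continuousWithinAt)
      (fun s hs => (hd s (interior_subset hs)).differentiableAt.differentiableWithinAt)
      (fun s hs => ?_)
    have hs' := interior_subset hs
    rw [(hd s hs').deriv]
    have hVr : 0 < V s ^ r := Real.rpow_pos_of_pos (hpos s hs') r
    have hexp : V s ^ (1 - r - 1) = (V s ^ r)⁻¹ := by
      rw [← Real.rpow_neg (hpos s hs').le]
      ring_nf
    have hsimp : deriv V s * (1 - r) * V s ^ (1 - r - 1) / (1 - r) + k * 1
        = (deriv V s + k * V s ^ r) / V s ^ r := by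
      rw [hexp]
      field_simp
    rw [hsimp]
    exact div_nonpos_of_nonpos_of_nonneg (by linarith [hineq s hs']) hVr.le
  exact hanti ⟨ha, hab.trans hb⟩ ⟨ha.trans hab, hb⟩ hab

/-- Fixed-time stability comparison lemma (Lemma 1 with `C = 0`): the settling time
is bounded by `T_max` independently of the initial value. -/
theorem fixed_time_convergence (k_p k_q p q : ℝ)
    (hkp : 0 < k_p) (hkq : 0 < k_q) (hp0 : 0 < p) (hp1 : p < 1) (hq : 1 < q)
    (V : ℝ → ℝ) (hdiff : Differentiable ℝ V)
    (hnonneg : ∀ t, 0 ≤ t → 0 ≤ V t)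
    (hineq : ∀ t, 0 ≤ t → deriv V t ≤ -k_p * V t ^ p - k_q * V t ^ q) :
    ∀ t, 1 / (k_p * (1 - p)) + 1 / (k_q * (q - 1)) ≤ t → V t = 0 := by
  intro T hT
  have hp' : 0 < 1 - p := by linarith
  have hq' : 0 < q - 1 := by linarith
  have hT2 : 0 < 1 / (k_p * (1 - p)) := by positivity
  have hT1 : 0 < 1 / (k_q * (q - 1)) := by positivity
  have hT0 : 0 ≤ T := by linarith
  have hP : ∀ s, 0 ≤ s → 0 ≤ k_p * V s ^ p := fun s hs =>
    mul_nonneg hkp.le (Real.rpow_nonneg (hnonneg s hs) p)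
  have hQ : ∀ s, 0 ≤ s → 0 ≤ k_q * V s ^ q := fun s hs =>
    mul_nonneg hkq.le (Real.rpow_nonneg (hnonneg s hs) q)
  have hanti : AntitoneOn V (Set.Ici 0) := by
    refine antitoneOn_of_deriv_nonpos (convex_Ici 0) hdiff.continuous.continuousOn
      hdiff.differentiableOn (fun s hs => ?_)
    have hs' : 0 ≤ s := interior_subset hs
    linarith [hineq s hs', hP s hs', hQ s hs']
  by_contra hne
  have hVT : 0 < V T := lt_of_le_of_ne (hnonneg T hT0) (Ne.symm hne)
  have hpos : ∀ s ∈ Set.Icc 0 T, 0 < V s := fun s hs =>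
    hVT.trans_le (hanti hs.1 hT0 hs.2)
  set T₁ := 1 / (k_q * (q - 1)) with hT₁
  have hT₁T : T₁ ≤ T := by linarith
  have hV₁ : 0 < V T₁ := hpos T₁ ⟨hT1.le, hT₁T⟩
  have hq_step := rpow_div_add_le hq.ne' hdiff hpos
    (fun s hs => by linarith [hineq s hs.1, hP s hs.1] : ∀ s ∈ Set.Icc 0 T, _ ≤ -k_q * V s ^ q)
    le_rfl hT1.le hT₁T
  have hp_step := rpow_div_add_le hp1.ne hdiff hpos
    (fun s hs => by linarith [hineq s hs.1, hQ s hs.1] : ∀ s ∈ Set.Icc 0 T, _ ≤ -k_p * V s ^ p)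
    hT1.le hT₁T le_rfl
  have hlt : V T₁ < 1 := by
    have h0 : 0 < V 0 ^ (1 - q) := Real.rpow_pos_of_pos (hpos 0 ⟨le_rfl, hT0⟩) _
    have hk : k_q * T₁ = 1 / (q - 1) := by
      rw [hT₁]
      field_simp
    have hneg : ∀ x : ℝ, x / (1 - q) = -(x / (q - 1)) := fun x => by
      rw [← neg_sub q 1, div_neg]
    rw [hneg, hneg, hk] at hq_step
    have h1 : (1 + V 0 ^ (1 - q)) / (q - 1) ≤ V T₁ ^ (1 - q) / (q - 1) := by
      rw [add_div]
      linarith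
    have h2 := (div_le_div_iff_of_pos_right hq').mp h1
    by_contra hge
    have h3 := Real.rpow_le_one_of_one_le_of_nonpos (not_lt.mp hge) (by linarith : 1 - q ≤ 0)
    linarith
  have hlt' : V T₁ ^ (1 - p) < 1 := Real.rpow_lt_one hV₁.le hlt hp'
  have hTpos : 0 < V T ^ (1 - p) / (1 - p) := div_pos (Real.rpow_pos_of_pos hVT _) hp'
  have hk : 1 / (1 - p) ≤ k_p * (T - T₁) := by
    have h : k_p * (1 / (k_p * (1 - p))) = 1 / (1 - p) := by field_simp
    rw [← h]
    exact mul_le_mul_of_nonneg_left (by linarith) hkp.le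
  have hdiv : V T₁ ^ (1 - p) / (1 - p) < 1 / (1 - p) := div_lt_div_of_pos_right hlt' hp'
  linarith
end

section
/- Let k_p, k_q, C > 0, let p, q be real numbers with 0 < p < 1 < q, and let 0 < θ < 1. Define B = min{ (C/((1-θ)*k_p))^(1/p), (C/((1-θ)*k_q))^(1/q) }. Let V : ℝ → ℝ be a differentiable function with V(t) ≥ 0 for all t, satisfying V'(t) ≤ -k_p*V(t)^p - k_q*V(t)^q + C for all t ≥ t₀. If V(t₀) ≤ B, then V(t) ≤ B for all t ≥ t₀. -/
/-!
The constant `B` is a strict barrier. Whichever term attains the minimum, at `V t = B` the matching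
dissipation term `k_r * B ^ r` equals `C / (1 - θ) > C`, while the other one is nonnegative; hence
`V' t < 0` whenever `V t = B`, and the fencing theorem
`image_le_of_deriv_right_lt_deriv_boundary` keeps `V` below the constant `B`.
-/

/-- At the level `(C / ((1 - θ) * k)) ^ (1 / r)` the term `k * V ^ r` alone dominates `C`. -/
lemma lt_mul_rpow_threshold {k C r θ : ℝ} (hk : 0 < k) (hC : 0 < C) (hr : r ≠ 0)
    (hθ0 : 0 < θ) (hθ1 : θ < 1) :
    C < k * ((C / ((1 - θ) * k)) ^ (1 / r)) ^ r := by
  have h1 : 0 < 1 - θ := by linarith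
  rw [← Real.rpow_mul (by positivity), one_div_mul_cancel hr, Real.rpow_one]
  have h2 : k * (C / ((1 - θ) * k)) = C / (1 - θ) := by field_simp
  rw [h2, lt_div_iff₀ h1]
  nlinarith


/-- Forward invariance of the residual region `Ω` asserted in Lemma 1 for the
differential inequality `V̇ ≤ -k_p V^p - k_q V^q + C`. -/
theorem residual_region_invariant (k_p k_q C p q θ : ℝ)
    (hkp : 0 < k_p) (hkq : 0 < k_q) (hC : 0 < C)
    (hp0 : 0 < p) (hp1 : p < 1) (hq : 1 < q) (hθ0 : 0 < θ) (hθ1 : θ < 1)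
    (B : ℝ) (hB : B = min ((C / ((1 - θ) * k_p)) ^ (1 / p)) ((C / ((1 - θ) * k_q)) ^ (1 / q)))
    (V : ℝ → ℝ) (hdiff : Differentiable ℝ V) (hnonneg : ∀ t, 0 ≤ V t)
    (t₀ : ℝ) (hineq : ∀ t, t₀ ≤ t → deriv V t ≤ -k_p * V t ^ p - k_q * V t ^ q + C)
    (hinit : V t₀ ≤ B) :
    ∀ t, t₀ ≤ t → V t ≤ B := by
  intro t ht
  refine image_le_of_deriv_right_lt_deriv_boundary (f' := deriv V) (B := fun _ => B)
    (B' := fun _ => 0) hdiff.continuous.continuousOn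
    (fun x _ => (hdiff x).hasDerivAt.hasDerivWithinAt) hinit (fun x => hasDerivAt_const x B)
    ?_ (Set.right_mem_Icc.mpr ht)
  intro x hx hVx
  have hd := hineq x hx.1
  have hp' : 0 ≤ k_p * V x ^ p := mul_nonneg hkp.le (Real.rpow_nonneg (hnonneg x) p)
  have hq' : 0 ≤ k_q * V x ^ q := mul_nonneg hkq.le (Real.rpow_nonneg (hnonneg x) q)
  rcases min_choice ((C / ((1 - θ) * k_p)) ^ (1 / p)) ((C / ((1 - θ) * k_q)) ^ (1 / q))
    with h | h
  · have hlt := lt_mul_rpow_threshold hkp hC hp0.ne' hθ0 hθ1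
    rw [← h, ← hB, ← hVx] at hlt
    linarith
  · have hlt := lt_mul_rpow_threshold hkq hC (zero_lt_one.trans hq).ne' hθ0 hθ1
    rw [← h, ← hB, ← hVx] at hlt
    linarith
end

section
/- Let G be a connected simple graph on a nonempty finite vertex set, let L be its Laplacian matrix over ℝ, and let b be a real-valued function on the vertices with b(v) ≥ 0 for every vertex v and b(v₀) > 0 for at least one vertex v₀. Then the matrix L + diag(b) is positive definite (in particular, it is invertible). -/
/-!
Both `xᵀ L x = ∑_{i ~ j} (x i - x j)²` (summed over edges) and `xᵀ diag(b) x = ∑ b v * x v ^ 2` are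
nonnegative, so if their sum vanishes, both do. The first then forces `x` to be constant, as the
graph is connected, and the second forces `x v₀ = 0` wherever `b v₀ > 0`; hence `x = 0`.
-/

open Matrix

/-- Lemmas 7 and 8: the Laplacian of a connected graph plus a nonzero nonnegative
diagonal matrix of leader-connection weights is positive definite. -/
theorem lapMatrix_add_diagonal_posDef {V : Type*} [Fintype V] [Nonempty V] [DecidableEq V]
    (G : SimpleGraph V) [DecidableRel G.Adj] (hG : G.Connected)
    (b : V → ℝ) (hb : ∀ v, 0 ≤ b v) (hb0 : ∃ v₀, 0 < b v₀) :
    (G.lapMatrix ℝ + Matrix.diagonal b).PosDef := by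
  obtain ⟨v₀, hv₀⟩ := hb0
  have hL := G.posSemidef_lapMatrix ℝ
  have hD : (Matrix.diagonal b).PosSemidef := .diagonal hb
  refine .of_dotProduct_mulVec_pos (hL.add hD).isHermitian fun x hx ↦ ?_
  have hLx := hL.dotProduct_mulVec_nonneg x
  have hDx : star x ⬝ᵥ (Matrix.diagonal b *ᵥ x) = ∑ v, b v * x v ^ 2 :=
    Finset.sum_congr rfl fun v _ ↦ by
      rw [mulVec_diagonal, Pi.star_apply, star_trivial]
      ring
  have hterm : ∀ v ∈ Finset.univ, 0 ≤ b v * x v ^ 2 := fun v _ ↦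
    mul_nonneg (hb v) (sq_nonneg _)
  have hsum := Finset.sum_nonneg hterm
  rw [add_mulVec, dotProduct_add, hDx]
  refine (add_nonneg hLx hsum).lt_of_ne' fun h0 ↦ hx ?_
  obtain ⟨hL0, hD0⟩ := (add_eq_zero_iff_of_nonneg hLx hsum).1 h0
  have hxv₀ : x v₀ = 0 := by
    simpa [hv₀.ne'] using (Finset.sum_eq_zero_iff_of_nonneg hterm).1 hD0 v₀ (Finset.mem_univ _)
  -- The kernel of the Laplacian consists of the functions constant on connected components.
  rw [star_trivial, ← toLinearMap₂'_apply',
    G.lapMatrix_toLinearMap₂'_apply'_eq_zero_iff_forall_reachable] at hL0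
  exact funext fun v ↦ (hL0 v v₀ (hG.preconnected v v₀)).trans hxv₀
end
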